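/- arXiv:2301.00300 — 3 statements merged into one kernel-verified Lean document; each statement's English description precedes it below -/
import Mathlib

section
/- For every real number k > 1, the family γ ↦ (2ℕ)^{−kγ} is summable over the set M of all multi-indices; that is, ∑_{γ∈M} ∏_{j≥1} (2j)^{−k·γ(j)} < ∞. (Zhang's lemma.) -/
/-!
The sum over multi-indices expands the product of geometric series
`∏_j ∑_n x_j ^ n`, where `x_j = (2j)^{-k} ∈ [0, 1/2]`. Each geometric series is at most
`exp (2 x_j)`, so every finite partial sum is at most `exp (2 ∑_j x_j)`, which is finite because
`k > 1`. This bound is `sum_finsupp_prod_pow_le`, stated for any index type; since the terms are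
nonnegative, it gives summability.
-/

open scoped BigOperators

/-- A multi-index: a finitely supported function `ℕ₊ → ℕ`. -/
abbrev MultiIndex := ℕ+ →₀ ℕ

/-- For a multi-index `γ` and a real number `c`,
`(2ℕ)^{cγ} = ∏_j (2j)^{c·γ(j)}` (a finite product over the support of `γ`). -/
noncomputable def twoNpow (c : ℝ) (γ : MultiIndex) : ℝ :=
  γ.prod fun j n => (2 * (j : ℝ)) ^ (c * (n : ℝ))

lemma geom_sum_le_exp_two_mul {x : ℝ} (h0 : 0 ≤ x) (h1 : x ≤ 1 / 2) (N : ℕ) :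
    ∑ n ∈ Finset.range N, x ^ n ≤ Real.exp (2 * x) := by
  have hlt : x < 1 := by linarith
  calc ∑ n ∈ Finset.range N, x ^ n ≤ ∑' n, x ^ n :=
        (summable_geometric_of_lt_one h0 hlt).sum_le_tsum _ fun n _ => pow_nonneg h0 n
    _ = (1 - x)⁻¹ := tsum_geometric_of_lt_one h0 hlt
    _ ≤ 2 * x + 1 := by
        rw [inv_le_iff_one_le_mul₀ (by linarith)]
        nlinarith
    _ ≤ Real.exp (2 * x) := Real.add_one_le_exp _

lemma sum_finsupp_prod_pow_le {ι : Type*} {x : ι → ℝ} (h0 : ∀ j, 0 ≤ x j)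
    (h1 : ∀ j, x j ≤ 1 / 2) (hx : Summable x) (S : Finset (ι →₀ ℕ)) :
    ∑ γ ∈ S, γ.prod (fun j n => x j ^ n) ≤ Real.exp (2 * ∑' j, x j) := by
  classical
  -- All members of `S` are supported in `T` and take values below `N`.
  obtain ⟨T, hsupp⟩ : ∃ T : Finset ι, ∀ γ ∈ S, γ.support ⊆ T :=
    ⟨S.biUnion Finsupp.support, fun γ hγ => Finset.subset_biUnion_of_mem Finsupp.support hγ⟩
  obtain ⟨N, hval⟩ : ∃ N : ℕ, ∀ γ ∈ S, ∀ j ∈ T, γ j < N :=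
    ⟨S.sup (fun γ => T.sup fun j => γ j) + 1, fun γ hγ j hj =>
      Nat.lt_succ_of_le ((Finset.le_sup (f := fun j => γ j) hj).trans
        (Finset.le_sup (f := fun γ : ι →₀ ℕ => T.sup fun j => γ j) hγ))⟩
  -- Restriction to `T` is injective on `S`, which embeds `S` into the box `{0, …, N - 1} ^ T`.
  obtain ⟨r, hr⟩ : ∃ r : (ι →₀ ℕ) → (∀ j ∈ T, ℕ), ∀ γ j hj, r γ j hj = γ j :=
    ⟨fun γ j _ => γ j, fun _ _ _ => rfl⟩
  have hinj : Set.InjOn r S := by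
    intro γ hγ δ hδ h
    ext j
    by_cases hj : j ∈ T
    · rw [← hr γ j hj, ← hr δ j hj, h]
    · rw [Finsupp.notMem_support_iff.mp fun h' => hj (hsupp γ hγ h'),
        Finsupp.notMem_support_iff.mp fun h' => hj (hsupp δ hδ h')]
  calc ∑ γ ∈ S, γ.prod (fun j n => x j ^ n)
      = ∑ γ ∈ S, ∏ j ∈ T.attach, x j.1 ^ (r γ j.1 j.2) := by
        refine Finset.sum_congr rfl fun γ hγ => ?_
        rw [Finsupp.prod_of_support_subset γ (hsupp γ hγ) _ (by simp)]
        simp only [hr]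
        exact (Finset.prod_attach T fun j => x j ^ γ j).symm
    _ = ∑ p ∈ S.image r, ∏ j ∈ T.attach, x j.1 ^ (p j.1 j.2) := by
        rw [Finset.sum_image hinj]
    _ ≤ ∑ p ∈ T.pi fun _ => Finset.range N, ∏ j ∈ T.attach, x j.1 ^ (p j.1 j.2) := by
        refine Finset.sum_le_sum_of_subset_of_nonneg ?_
          fun p _ _ => Finset.prod_nonneg fun j _ => pow_nonneg (h0 _) _
        intro p hp
        obtain ⟨γ, hγ, rfl⟩ := Finset.mem_image.mp hp
        exact Finset.mem_pi.mpr fun j hj => Finset.mem_range.mpr (hr γ j hj ▸ hval γ hγ j hj)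
    _ = ∏ j ∈ T, ∑ n ∈ Finset.range N, x j ^ n := by rw [Finset.prod_sum]
    _ ≤ ∏ j ∈ T, Real.exp (2 * x j) :=
        Finset.prod_le_prod (fun j _ => Finset.sum_nonneg fun n _ => pow_nonneg (h0 j) n)
          fun j _ => geom_sum_le_exp_two_mul (h0 j) (h1 j) N
    _ = Real.exp (2 * ∑ j ∈ T, x j) := by rw [← Real.exp_sum, Finset.mul_sum]
    _ ≤ Real.exp (2 * ∑' j, x j) := by
        have := hx.sum_le_tsum T fun j _ => h0 j
        gcongr

lemma summable_finsupp_prod_pow {ι : Type*} {x : ι → ℝ} (h0 : ∀ j, 0 ≤ x j)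
    (h1 : ∀ j, x j ≤ 1 / 2) (hx : Summable x) :
    Summable fun γ : ι →₀ ℕ => γ.prod fun j n => x j ^ n :=
  summable_of_sum_le (fun _ => Finset.prod_nonneg fun j _ => pow_nonneg (h0 j) _)
    (sum_finsupp_prod_pow_le h0 h1 hx)

/-- Zhang's lemma: for every `k > 1` the family `γ ↦ (2ℕ)^{-kγ}` is summable over
the set of all multi-indices. -/
theorem zhang_lemma (k : ℝ) (hk : 1 < k) :
    Summable fun γ : MultiIndex => twoNpow (-k) γ := by
  have hpos : ∀ j : ℕ+, (1 : ℝ) ≤ j := fun j => by exact_mod_cast j.pos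
  have hsum : Summable fun j : ℕ+ => (2 * (j : ℝ)) ^ (-k) := by
    have h : Summable fun n : ℕ => (2 : ℝ) ^ (-k) * (n : ℝ) ^ (-k) :=
      (Real.summable_nat_rpow.mpr (by linarith)).mul_left _
    refine (h.comp_injective PNat.coe_injective).congr fun j => ?_
    simp [Real.mul_rpow]
  have hhalf : ∀ j : ℕ+, (2 * (j : ℝ)) ^ (-k) ≤ 1 / 2 := fun j => by
    have hj := hpos j
    calc (2 * (j : ℝ)) ^ (-k) ≤ (2 * (j : ℝ)) ^ (-1 : ℝ) :=
          Real.rpow_le_rpow_of_exponent_le (by linarith) (by linarith)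
      _ = 1 / (2 * (j : ℝ)) := by rw [Real.rpow_neg_one, one_div]
      _ ≤ 1 / 2 := one_div_le_one_div_of_le (by norm_num) (by linarith)
  refine (summable_finsupp_prod_pow (fun j => by positivity) hhalf hsum).congr fun γ => ?_
  refine Finset.prod_congr rfl fun j _ => ?_
  dsimp only
  rw [Real.rpow_mul (by positivity), Real.rpow_natCast]
end

section
/- Let d ≥ 1 and let T be a continuous linear functional on the Schwartz space S(ℝ^d) (i.e. a tempered distribution). Set b_β := T(η_β) for each β ∈ ℕ₊^d. Then there exists a d-tuple θ = (θ₁,…,θ_d) of non-negative integers such that ∑_{β∈ℕ₊^d} b_β² · β₁^{−θ₁}⋯β_d^{−θ_d} < ∞. -/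
/-!
A continuous functional `T` on the Schwartz space is dominated by finitely many Schwartz
seminorms, so it suffices that every seminorm of `η_β` is at most `C (β₁⋯β_d)^p`
(`pow_norm_mul_iteratedFDeriv_le`). Then `θ_i = 2q + 2`, with `q` an exponent serving all these
seminorms, leaves the convergent series `∑_β ∏ β_i⁻²` as a majorant.

The seminorm bound has two ingredients.

* The ladder relations `x ζ_n = a_n ζ_{n-1} + b_n ζ_{n+1}` and `ζ_n' = a_n ζ_{n-1} - b_n ζ_{n+1}`
  with `0 ≤ a_n, b_n ≤ n`. They turn multiplication of `η_β` by a coordinate, and partial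
  derivatives of `η_β`, into combinations of two neighbouring `η`'s, at the cost of one factor
  `β₁⋯β_d` (`ladder_bound`). By induction on the power of `‖x‖` and on the order of
  differentiation, only the sup norm of `η_β` remains to be estimated.
* The bound `|ζ_n| ≤ 4 n` (`abs_hermiteFun_le`). Since `h_n(y) e^{-y²/2}` is, up to sign, the
  `n`-th derivative of the entire function `e^{-z²/2}` at `y`, Cauchy's estimate on the circle of
  radius `√n` gives `|h_n(y)| ≤ n! (e/n)^{n/2} e^{y²/4}` (`abs_hermite_le`); Stirling's formula
  compares the factor `n! (e/n)^{n/2}` with `√n!`.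
-/

open scoped BigOperators

/-- The `n`-th Hermite function `ζ_n` (indexed by `n ∈ ℕ₊`):
`ζ_n(x) = π^{-1/4} ((n-1)!)^{-1/2} e^{-x²/2} h_{n-1}(√2 x)`,
where `h_k` is the `k`-th (probabilists') Hermite polynomial. -/
noncomputable def hermiteFun (n : ℕ+) (x : ℝ) : ℝ :=
  Real.pi ^ (-(1 / 4 : ℝ)) * ((Nat.factorial ((n : ℕ) - 1) : ℝ)) ^ (-(1 / 2 : ℝ)) *
    Real.exp (-x ^ 2 / 2) *
      Polynomial.aeval (Real.sqrt 2 * x) (Polynomial.hermite ((n : ℕ) - 1))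

/-- The tensor-product Hermite function `η_β` on `ℝ^d`, for `β ∈ ℕ₊^d`. -/
noncomputable def hermiteTensor {d : ℕ} (β : Fin d → ℕ+)
    (x : EuclideanSpace ℝ (Fin d)) : ℝ :=
  ∏ i, hermiteFun (β i) (x i)

/-! ### A uniform bound for the Hermite functions -/

open Polynomial in
theorem derivative_hermite_succ (n : ℕ) :
    derivative (hermite (n + 1)) = ((n : ℤ[X]) + 1) * hermite n := by
  induction n with
  | zero => simp
  | succ n ih =>
    rw [hermite_succ (n + 1), derivative_sub, derivative_mul, ih, derivative_mul, hermite_succ n]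
    simp
    ring

open Polynomial in
theorem complex_deriv_gaussian (n : ℕ) (z : ℂ) :
    deriv^[n] (fun w : ℂ => Complex.exp (-(w ^ 2 / 2))) z =
      (-1 : ℂ) ^ n * (aeval z (hermite n) * Complex.exp (-(z ^ 2 / 2))) := by
  induction n generalizing z with
  | zero => simp
  | succ n ih =>
    replace ih : deriv^[n] _ = _ := _root_.funext ih
    rw [Function.iterate_succ_apply', ih]
    have h1 : HasDerivAt (fun w : ℂ => Complex.exp (-(w ^ 2 / 2)))
        (Complex.exp (-(z ^ 2 / 2)) * (-z)) z := by
      have := (((hasDerivAt_id z).pow 2).div_const 2).neg.cexp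
      refine this.congr_deriv ?_
      simp
    have h2 : HasDerivAt (fun w : ℂ => aeval w (hermite n)) (aeval z (derivative (hermite n))) z :=
      Polynomial.hasDerivAt_aeval _ _
    rw [((h2.fun_mul h1).const_mul ((-1 : ℂ) ^ n)).deriv, hermite_succ, map_sub, map_mul, aeval_X,
      pow_succ]
    ring

/-- Cauchy's estimate for the `n`-th derivative of `e^{-z²/2}` on the circle of radius `√n`
about `y`. -/
theorem abs_hermite_le {n : ℕ} (hn : n ≠ 0) (y : ℝ) :
    |Polynomial.aeval y (Polynomial.hermite n)| ≤
      (n.factorial : ℝ) * Real.exp (n / 2) / Real.sqrt n ^ n * Real.exp (y ^ 2 / 4) := by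
  have hr : 0 < Real.sqrt n := Real.sqrt_pos.2 (by positivity)
  have hd : DiffContOnCl ℂ (fun w : ℂ => Complex.exp (-(w ^ 2 / 2)))
      (Metric.ball (y : ℂ) (Real.sqrt n)) := by
    apply Differentiable.diffContOnCl
    fun_prop
  have key := Complex.norm_iteratedDeriv_le_of_forall_mem_sphere_norm_le n hr hd
    (C := Real.exp (n / 2 - y ^ 2 / 4)) ?_
  · rw [iteratedDeriv_eq_iterate, complex_deriv_gaussian] at key
    have e1 : Polynomial.aeval (y : ℂ) (Polynomial.hermite n)
        = ((Polynomial.aeval y (Polynomial.hermite n) : ℝ) : ℂ) :=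
      Polynomial.aeval_algebraMap_apply ℂ y _
    rw [norm_mul, norm_mul, norm_pow, norm_neg, norm_one, one_pow, one_mul, e1, Complex.norm_real,
      Complex.norm_exp, Real.norm_eq_abs] at key
    have e2 : (-((y : ℂ) ^ 2 / 2)).re = -(y ^ 2 / 2) := by
      norm_cast
    rw [e2] at key
    calc _ = |Polynomial.aeval y (Polynomial.hermite n)| * Real.exp (-(y ^ 2 / 2))
          * Real.exp (y ^ 2 / 2) := by
          rw [mul_assoc, ← Real.exp_add]; simp
      _ ≤ (n.factorial * Real.exp (n / 2 - y ^ 2 / 4) / Real.sqrt n ^ n) *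
          Real.exp (y ^ 2 / 2) := by gcongr
      _ = _ := by
        have : Real.exp (n / 2 - y ^ 2 / 4) * Real.exp (y ^ 2 / 2)
            = Real.exp (n / 2) * Real.exp (y ^ 2 / 4) := by
          rw [← Real.exp_add, ← Real.exp_add]; congr 1; ring
        linear_combination (n.factorial : ℝ) / Real.sqrt n ^ n * this
  · intro z hz
    rw [Complex.norm_exp]
    apply Real.exp_le_exp.2
    have h1 : (z.re - y) ^ 2 + z.im ^ 2 = n := by
      have h2 : ‖z - y‖ = Real.sqrt n := by simpa [dist_eq_norm] using hz
      have h3 : ‖z - y‖ ^ 2 = n := by rw [h2, Real.sq_sqrt (by positivity)]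
      rw [← Complex.normSq_eq_norm_sq, Complex.normSq_apply] at h3
      simp at h3
      linarith
    have h4 : (-(z ^ 2 / 2)).re = -((z.re ^ 2 - z.im ^ 2) / 2) := by
      have : (z ^ 2 / 2).re = (z ^ 2).re / 2 := by
        simp
      rw [Complex.neg_re, this, sq z, Complex.mul_re]
      ring
    rw [h4]
    nlinarith [sq_nonneg (2 * z.re - y)]

/-- An upper bound of Stirling type, deduced from the monotonicity of `stirlingSeq`. -/
theorem factorial_mul_exp_le {n : ℕ} (hn : n ≠ 0) :
    (n.factorial : ℝ) * Real.exp n / (n : ℝ) ^ n ≤ (4 * (n : ℝ)) ^ 2 := by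
  obtain ⟨m, rfl⟩ := Nat.exists_eq_succ_of_ne_zero hn
  have h := Stirling.stirlingSeq'_antitone (Nat.zero_le m)
  simp only [Function.comp] at h
  have h0 : Stirling.stirlingSeq (Nat.succ 0) ≤ 3 := by
    rw [show Nat.succ 0 = 1 from rfl, Stirling.stirlingSeq_one]
    have := Real.exp_one_lt_d9
    rw [div_le_iff₀ (by positivity)]
    nlinarith [Real.one_le_sqrt.2 (show (1:ℝ) ≤ 2 by norm_num)]
  have h2 := h.trans h0
  set n := m.succ
  have hn1 : (1 : ℝ) ≤ n := by exact_mod_cast Nat.one_le_iff_ne_zero.2 hn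
  unfold Stirling.stirlingSeq at h2
  rw [div_le_iff₀ (by positivity), div_pow] at h2
  rw [div_le_iff₀ (by positivity)]
  have he : Real.exp 1 ^ n = Real.exp n := by rw [← Real.exp_nat_mul]; simp
  rw [he] at h2
  have hs : Real.sqrt (2 * n) ≤ 2 * n := by
    rw [Real.sqrt_le_left (by positivity)]; nlinarith
  calc (n.factorial : ℝ) * Real.exp n
      ≤ 3 * (Real.sqrt (2 * n) * (n ^ n / Real.exp n)) * Real.exp n := by gcongr
    _ = 3 * Real.sqrt (2 * n) * n ^ n := by field_simp
    _ ≤ 3 * (2 * n) * n ^ n := by gcongr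
    _ ≤ _ := by gcongr; nlinarith

/-- A crude form of Cramér's inequality: polynomial growth in `n`, uniformly in `x`. -/
theorem abs_hermiteFun_le (n : ℕ+) (x : ℝ) : |hermiteFun n x| ≤ 4 * (n : ℕ) := by
  have hn1 : (1 : ℝ) ≤ (n : ℕ) := by exact_mod_cast n.2
  obtain ⟨m, hm⟩ : ∃ m : ℕ, (n : ℕ) = m + 1 := ⟨n - 1, by have := n.pos; omega⟩
  have hpi : Real.pi ^ (-(1 / 4 : ℝ)) ≤ 1 :=
    Real.rpow_le_one_of_one_le_of_nonpos (by linarith [Real.pi_gt_three]) (by norm_num)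
  have hpi0 : 0 ≤ Real.pi ^ (-(1 / 4 : ℝ)) := by positivity
  unfold hermiteFun
  rw [hm, Nat.add_sub_cancel, abs_mul, abs_of_nonneg (by positivity)]
  rcases Nat.eq_zero_or_pos m with rfl | hm0
  · simp
    have : Real.exp (-x ^ 2 / 2) ≤ 1 := Real.exp_le_one_iff.2 (by nlinarith [sq_nonneg x])
    have h4 := mul_le_one₀ hpi (Real.exp_pos _).le this
    norm_num at h4 ⊢
    linarith
  · have hm1 : (0 : ℝ) < m := by exact_mod_cast hm0
    have hH := abs_hermite_le hm0.ne' (Real.sqrt 2 * x)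
    have hF := factorial_mul_exp_le hm0.ne'
    have e1 : (Real.sqrt 2 * x) ^ 2 / 4 = x ^ 2 / 2 := by
      rw [mul_pow, Real.sq_sqrt (by norm_num)]; ring
    rw [e1] at hH
    have e2 : ((m.factorial : ℝ)) ^ (-(1 / 2 : ℝ)) = (Real.sqrt m.factorial)⁻¹ := by
      rw [Real.rpow_neg (by positivity), Real.sqrt_eq_rpow]
    rw [e2]
    have hs : 0 < Real.sqrt (m.factorial : ℝ) := Real.sqrt_pos.2 (by positivity)
    have hs2 : Real.sqrt (m.factorial : ℝ) ^ 2 = m.factorial := Real.sq_sqrt (by positivity)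
    have hr : 0 < Real.sqrt (m : ℝ) := Real.sqrt_pos.2 hm1
    -- the bound of `abs_hermite_le` divided by `√m!` is the square root of the Stirling quotient
    have hq : (Real.sqrt m.factorial * Real.exp (m / 2) / Real.sqrt m ^ m) ≤ 4 * m := by
      apply le_of_sq_le_sq _ (by positivity)
      refine le_trans (le_of_eq ?_) hF
      rw [div_pow, mul_pow, hs2, ← Real.exp_nat_mul, ← pow_mul, mul_comm m 2, pow_mul,
        Real.sq_sqrt hm1.le]
      congr 3
      push_cast; ring
    calc _ ≤ 1 * (Real.sqrt m.factorial)⁻¹ * Real.exp (-x ^ 2 / 2) *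
          ((m.factorial : ℝ) * Real.exp (m / 2) / Real.sqrt m ^ m * Real.exp (x ^ 2 / 2)) := by
          gcongr
      _ = ((Real.sqrt m.factorial)⁻¹ * m.factorial) * Real.exp (m / 2) / Real.sqrt m ^ m *
          (Real.exp (-x ^ 2 / 2) * Real.exp (x ^ 2 / 2)) := by ring
      _ = Real.sqrt m.factorial * Real.exp (m / 2) / Real.sqrt m ^ m := by
          rw [← Real.exp_add]
          nth_rewrite 2 [← hs2]
          have : -x ^ 2 / 2 + x ^ 2 / 2 = 0 := by ring
          rw [this, Real.exp_zero]
          field_simp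
      _ ≤ 4 * m := hq
      _ ≤ _ := by push_cast; linarith

/-! ### Ladder relations in one variable -/

theorem factorial_succ_rpow (m : ℕ) :
    Real.sqrt (m + 1 : ℕ) * ((m + 1).factorial : ℝ) ^ (-(1 / 2 : ℝ)) =
      (m.factorial : ℝ) ^ (-(1 / 2 : ℝ)) := by
  have h : (0 : ℝ) < (m + 1 : ℕ) := by positivity
  rw [Nat.factorial_succ, Nat.cast_mul, Real.mul_rpow (by positivity) (by positivity),
    Real.sqrt_eq_rpow, ← mul_assoc, ← Real.rpow_add h]
  norm_num

/-- The Hermite function with its polynomial factor `h_{n-1}` replaced by the derivative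
`h_{n-1}'`; up to a constant this is the annihilation operator applied to `ζ_n`. -/
noncomputable def hermiteLower (n : ℕ+) (x : ℝ) : ℝ :=
  Real.pi ^ (-(1 / 4 : ℝ)) * ((Nat.factorial ((n : ℕ) - 1) : ℝ)) ^ (-(1 / 2 : ℝ)) *
    Real.exp (-x ^ 2 / 2) *
      Polynomial.aeval (Real.sqrt 2 * x)
        (Polynomial.derivative (Polynomial.hermite ((n : ℕ) - 1)))

/-- For `n = 1` both sides vanish, the truncated `1 - 1 = 1` in `ℕ+` being multiplied by `0`. -/
theorem hermiteLower_eq (n : ℕ+) (x : ℝ) :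
    hermiteLower n x = Real.sqrt ((n : ℕ) - 1) * hermiteFun (n - 1) x := by
  rcases eq_or_ne n 1 with rfl | hn
  · simp [hermiteLower]
  · obtain ⟨k, rfl⟩ := PNat.exists_eq_succ_of_ne_one hn
    obtain ⟨m, hm⟩ : ∃ m : ℕ, (k : ℕ) = m + 1 := ⟨k - 1, by have := k.pos; omega⟩
    have e : k + 1 - 1 = k := by
      apply PNat.eq
      rw [PNat.sub_coe, if_pos (PNat.lt_add_left 1 k)]
      simp
    rw [e]
    unfold hermiteLower hermiteFun
    simp only [PNat.add_coe, PNat.one_coe, Nat.add_sub_cancel, hm]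
    rw [← factorial_succ_rpow m, derivative_hermite_succ]
    have h3 : Real.sqrt (m + 1 : ℕ) * Real.sqrt (m + 1 : ℕ) = (m : ℝ) + 1 := by
      rw [Real.mul_self_sqrt (by positivity)]; push_cast; rfl
    have h4 : Real.sqrt (((m + 1 + 1 : ℕ) : ℝ) - 1) = Real.sqrt (m + 1 : ℕ) := by
      congr 1; push_cast; ring
    rw [h4]
    simp only [map_mul, map_add, map_natCast, map_one]
    rw [← h3]
    ring

theorem hermiteFun_succ (n : ℕ+) (x : ℝ) :
    Real.sqrt (n : ℕ) * hermiteFun (n + 1) x =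
      Real.sqrt 2 * x * hermiteFun n x - hermiteLower n x := by
  obtain ⟨m, hm⟩ : ∃ m : ℕ, (n : ℕ) = m + 1 := ⟨n - 1, by have := n.pos; omega⟩
  unfold hermiteLower hermiteFun
  simp only [PNat.add_coe, PNat.one_coe, Nat.add_sub_cancel, hm]
  rw [← factorial_succ_rpow m, Polynomial.hermite_succ, map_sub, map_mul, Polynomial.aeval_X]
  ring

theorem hasDerivAt_hermiteFun' (n : ℕ+) (x : ℝ) :
    HasDerivAt (hermiteFun n) (-x * hermiteFun n x + Real.sqrt 2 * hermiteLower n x) x := by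
  have h1 : HasDerivAt (fun w : ℝ => Real.exp (-w ^ 2 / 2))
      (Real.exp (-x ^ 2 / 2) * (-x)) x := by
    have := (((hasDerivAt_id x).pow 2).neg.div_const 2).exp
    refine this.congr_deriv ?_
    simp
    ring
  have h2 := (Polynomial.hasDerivAt_aeval (Polynomial.hermite ((n : ℕ) - 1))
    (Real.sqrt 2 * x)).comp x ((hasDerivAt_id x).const_mul (Real.sqrt 2))
  have h3 := (h1.const_mul (Real.pi ^ (-(1 / 4 : ℝ)) *
    ((Nat.factorial ((n : ℕ) - 1) : ℝ)) ^ (-(1 / 2 : ℝ)))).fun_mul h2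
  refine h3.congr_deriv ?_
  simp only [hermiteFun, hermiteLower, Function.comp]
  ring

/-- Coefficient of `ζ_{n-1}` in `x ζ_n` and in `ζ_n'`. -/
noncomputable def coeffDown (n : ℕ+) : ℝ := Real.sqrt ((n : ℕ) - 1) / Real.sqrt 2

/-- Coefficient of `ζ_{n+1}` in `x ζ_n` and, up to sign, in `ζ_n'`. -/
noncomputable def coeffUp (n : ℕ+) : ℝ := Real.sqrt (n : ℕ) / Real.sqrt 2

theorem mul_hermiteFun (n : ℕ+) (x : ℝ) :
    x * hermiteFun n x = coeffDown n * hermiteFun (n - 1) x + coeffUp n * hermiteFun (n + 1) x := by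
  have h1 := hermiteLower_eq n x
  have h2 := hermiteFun_succ n x
  have hs : Real.sqrt 2 ≠ 0 := by positivity
  unfold coeffDown coeffUp
  field_simp
  linear_combination -h2 + h1

theorem hasDerivAt_hermiteFun (n : ℕ+) (x : ℝ) :
    HasDerivAt (hermiteFun n)
      (coeffDown n * hermiteFun (n - 1) x - coeffUp n * hermiteFun (n + 1) x) x := by
  refine (hasDerivAt_hermiteFun' n x).congr_deriv ?_
  have h1 := hermiteLower_eq n x
  have h3 := mul_hermiteFun n x
  have h2 : Real.sqrt 2 * hermiteLower n x = 2 * (coeffDown n * hermiteFun (n - 1) x) := by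
    have hs : Real.sqrt 2 ^ 2 = 2 := Real.sq_sqrt (by norm_num)
    have hs0 : Real.sqrt 2 ≠ 0 := by positivity
    rw [h1, coeffDown]
    field_simp
    rw [hs]
    ring
  linear_combination h2 - h3

theorem abs_coeffUp_le (n : ℕ+) : |coeffUp n| ≤ (n : ℕ) := by
  have hn1 : (1 : ℝ) ≤ (n : ℕ) := by exact_mod_cast n.2
  rw [coeffUp, abs_of_nonneg (by positivity)]
  refine (div_le_self (Real.sqrt_nonneg _) (Real.one_le_sqrt.2 (by norm_num))).trans ?_
  exact Real.sqrt_le_iff.2 ⟨by linarith, by nlinarith⟩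

theorem abs_coeffDown_le (n : ℕ+) : |coeffDown n| ≤ (n : ℕ) := by
  refine le_trans ?_ (abs_coeffUp_le n)
  rw [coeffUp, coeffDown, abs_of_nonneg (by positivity), abs_of_nonneg (by positivity)]
  gcongr
  linarith

/-! ### Tensor products -/

theorem contDiff_hermiteFun (n : ℕ+) {r : WithTop ℕ∞} : ContDiff ℝ r (hermiteFun n) := by
  have h : ContDiff ℝ r fun x : ℝ => Polynomial.aeval (Real.sqrt 2 * x)
      (Polynomial.hermite ((n : ℕ) - 1)) :=
    (Polynomial.contDiff_aeval _ _).comp (contDiff_const.mul contDiff_id)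
  unfold hermiteFun
  fun_prop

theorem contDiff_hermiteTensor {d : ℕ} (β : Fin d → ℕ+) {r : WithTop ℕ∞} :
    ContDiff ℝ r (hermiteTensor β) := by
  unfold hermiteTensor
  refine contDiff_prod fun i _ => (contDiff_hermiteFun (β i)).comp ?_
  exact (EuclideanSpace.proj (𝕜 := ℝ) i).contDiff

theorem hermiteTensor_update {d : ℕ} (β : Fin d → ℕ+) (i : Fin d) (m : ℕ+)
    (x : EuclideanSpace ℝ (Fin d)) :
    hermiteTensor (Function.update β i m) x =
      (∏ j ∈ Finset.univ.erase i, hermiteFun (β j) (x j)) * hermiteFun m (x i) := by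
  unfold hermiteTensor
  rw [← Finset.prod_erase_mul _ _ (Finset.mem_univ i)]
  congr 1
  · refine Finset.prod_congr rfl fun j hj => ?_
    rw [Function.update_of_ne (Finset.ne_of_mem_erase hj)]
  · simp

theorem coord_mul_hermiteTensor {d : ℕ} (β : Fin d → ℕ+) (i : Fin d)
    (x : EuclideanSpace ℝ (Fin d)) :
    x i * hermiteTensor β x =
      coeffDown (β i) * hermiteTensor (Function.update β i (β i - 1)) x +
        coeffUp (β i) * hermiteTensor (Function.update β i (β i + 1)) x := by
  have h := hermiteTensor_update β i (β i) x
  rw [Function.update_eq_self] at h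
  rw [hermiteTensor_update, hermiteTensor_update, h]
  linear_combination (∏ j ∈ Finset.univ.erase i, hermiteFun (β j) (x j)) *
    mul_hermiteFun (β i) (x i)

/-- The `i`-th partial derivative of `η_β`, expressed through its neighbours. -/
noncomputable def partialTensor {d : ℕ} (β : Fin d → ℕ+) (i : Fin d) :
    EuclideanSpace ℝ (Fin d) → ℝ :=
  coeffDown (β i) • hermiteTensor (Function.update β i (β i - 1)) +
    (-coeffUp (β i)) • hermiteTensor (Function.update β i (β i + 1))

theorem contDiff_smul_hermiteTensor {d : ℕ} (a : ℝ) (β : Fin d → ℕ+) {r : WithTop ℕ∞} :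
    ContDiff ℝ r (a • hermiteTensor β) :=
  (contDiff_hermiteTensor β).const_smul a

theorem contDiff_partialTensor {d : ℕ} (β : Fin d → ℕ+) (i : Fin d) {r : WithTop ℕ∞} :
    ContDiff ℝ r (partialTensor β i) :=
  (contDiff_smul_hermiteTensor _ _).add (contDiff_smul_hermiteTensor _ _)

theorem fderiv_hermiteTensor {d : ℕ} (β : Fin d → ℕ+) :
    fderiv ℝ (hermiteTensor β) = ∑ i, (ContinuousLinearMap.toSpanSingleton ℝ
      (EuclideanSpace.proj (𝕜 := ℝ) i : EuclideanSpace ℝ (Fin d) →L[ℝ] ℝ)) ∘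
        partialTensor β i := by
  refine fderiv_eq fun x => ?_
  have h : ∀ i ∈ (Finset.univ : Finset (Fin d)),
      HasFDerivAt (fun y : EuclideanSpace ℝ (Fin d) => hermiteFun (β i) (y i))
        ((coeffDown (β i) * hermiteFun (β i - 1) (x i) -
          coeffUp (β i) * hermiteFun (β i + 1) (x i)) •
            (EuclideanSpace.proj (𝕜 := ℝ) i : EuclideanSpace ℝ (Fin d) →L[ℝ] ℝ)) x := by
    intro i _
    have hp := (EuclideanSpace.proj (𝕜 := ℝ) i : EuclideanSpace ℝ (Fin d) →L[ℝ] ℝ).hasFDerivAt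
      (x := x)
    exact HasDerivAt.comp_hasFDerivAt (f := fun y : EuclideanSpace ℝ (Fin d) => y i) x
      (hasDerivAt_hermiteFun (β i) (x i)) hp
  refine (HasFDerivAt.finsetProd h).congr_fderiv ?_
  rw [Finset.sum_apply]
  refine Finset.sum_congr rfl fun i _ => ?_
  rw [smul_smul, Function.comp_apply, ContinuousLinearMap.toSpanSingleton_apply]
  congr 1
  simp only [partialTensor, Pi.add_apply, Pi.smul_apply, smul_eq_mul, hermiteTensor_update]
  ring

/-! ### Polynomial growth of the Schwartz seminorms -/

/-- The weight `β₁ ⋯ β_d` in which growth is measured. -/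
noncomputable def weight {d : ℕ} (β : Fin d → ℕ+) : ℝ := ∏ i, ((β i : ℕ) : ℝ)

theorem one_le_cast (n : ℕ+) : (1 : ℝ) ≤ (n : ℕ) := by exact_mod_cast n.2

theorem one_le_weight {d : ℕ} (β : Fin d → ℕ+) : 1 ≤ weight β :=
  Finset.one_le_prod fun i _ => one_le_cast (β i)

theorem weight_update_le {d : ℕ} (β : Fin d → ℕ+) (i : Fin d) (m : ℕ+)
    (hm : (m : ℕ) ≤ 2 * (β i : ℕ)) : weight (Function.update β i m) ≤ 2 * weight β := by
  have hm' : ((m : ℕ) : ℝ) ≤ 2 * ((β i : ℕ) : ℝ) := by exact_mod_cast hm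
  unfold weight
  rw [← Finset.prod_erase_mul _ _ (Finset.mem_univ i),
    ← Finset.prod_erase_mul _ (fun i => ((β i : ℕ) : ℝ)) (Finset.mem_univ i)]
  have : ∏ j ∈ Finset.univ.erase i, ((Function.update β i m j : ℕ) : ℝ) =
      ∏ j ∈ Finset.univ.erase i, ((β j : ℕ) : ℝ) := by
    refine Finset.prod_congr rfl fun j hj => ?_
    rw [Function.update_of_ne (Finset.ne_of_mem_erase hj)]
  rw [this, Function.update_self, mul_left_comm]
  gcongr

theorem le_weight {d : ℕ} (β : Fin d → ℕ+) (i : Fin d) : ((β i : ℕ) : ℝ) ≤ weight β := by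
  unfold weight
  rw [← Finset.prod_erase_mul _ _ (Finset.mem_univ i)]
  have : (1 : ℝ) ≤ ∏ j ∈ Finset.univ.erase i, ((β j : ℕ) : ℝ) :=
    Finset.one_le_prod fun i _ => one_le_cast (β i)
  nlinarith [one_le_cast (β i)]

/-- A polynomial bound `F β ≤ C (β₁⋯β_d)^p` is stable under the ladder combination
`|coeffDown| F(β - eᵢ) + |coeffUp| F(β + eᵢ)`. -/
theorem ladder_bound {d : ℕ} {F : (Fin d → ℕ+) → ℝ} {C : ℝ} {p : ℕ} (hC : 0 ≤ C)
    (hF : ∀ β, F β ≤ C * weight β ^ p) (β : Fin d → ℕ+) (i : Fin d) :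
    |coeffDown (β i)| * F (Function.update β i (β i - 1)) +
      |coeffUp (β i)| * F (Function.update β i (β i + 1)) ≤
        (2 * C * 2 ^ p) * weight β ^ (p + 1) := by
  have hW := one_le_weight β
  have key : ∀ (a : ℝ) (m : ℕ+), |a| ≤ (β i : ℕ) → (m : ℕ) ≤ 2 * (β i : ℕ) →
      |a| * F (Function.update β i m) ≤ C * 2 ^ p * weight β ^ (p + 1) := by
    intro a m ha hm
    have h0 : 0 ≤ weight (Function.update β i m) := zero_le_one.trans (one_le_weight _)
    calc |a| * F (Function.update β i m)
        ≤ |a| * (C * weight (Function.update β i m) ^ p) := by gcongr; exact hF _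
      _ ≤ weight β * (C * (2 * weight β) ^ p) := by
          gcongr
          · exact ha.trans (le_weight β i)
          · exact weight_update_le β i m hm
      _ = _ := by rw [mul_pow]; ring
  have h1 := key _ (β i - 1) (abs_coeffDown_le (β i)) (by
    have := (β i).pos
    rw [PNat.sub_coe]; split_ifs <;> simp <;> omega)
  have h2 := key _ (β i + 1) (abs_coeffUp_le (β i)) (by
    have := (β i).pos
    rw [PNat.add_coe, PNat.one_coe]; omega)
  linarith

theorem euclidean_norm_le_sum {d : ℕ} (x : EuclideanSpace ℝ (Fin d)) : ‖x‖ ≤ ∑ i, |x i| := by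
  rw [EuclideanSpace.norm_eq]
  refine Real.sqrt_le_iff.2 ⟨Finset.sum_nonneg fun i _ => abs_nonneg _, ?_⟩
  simpa using Finset.sum_sq_le_sq_sum_of_nonneg (s := Finset.univ) (f := fun i => |x i|)
    fun i _ => abs_nonneg _

theorem abs_hermiteTensor_le {d : ℕ} (β : Fin d → ℕ+) (x : EuclideanSpace ℝ (Fin d)) :
    |hermiteTensor β x| ≤ 4 ^ d * weight β ^ 1 := by
  unfold hermiteTensor weight
  rw [Finset.abs_prod, pow_one]
  calc _ ≤ ∏ i, (4 * ((β i : ℕ) : ℝ)) :=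
        Finset.prod_le_prod (fun i _ => abs_nonneg _) fun i _ => abs_hermiteFun_le _ _
    _ = _ := by rw [Finset.prod_mul_distrib]; simp

theorem pow_norm_mul_hermiteTensor_le (d k : ℕ) : ∃ (C : ℝ) (p : ℕ), 0 ≤ C ∧
    ∀ (x : EuclideanSpace ℝ (Fin d)) (β : Fin d → ℕ+),
      ‖x‖ ^ k * |hermiteTensor β x| ≤ C * weight β ^ p := by
  induction k with
  | zero => exact ⟨4 ^ d, 1, by positivity, fun x β => by simpa using abs_hermiteTensor_le β x⟩
  | succ k ih =>
    obtain ⟨C, p, hC, h⟩ := ih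
    refine ⟨d * (2 * C * 2 ^ p), p + 1, by positivity, fun x β => ?_⟩
    calc ‖x‖ ^ (k + 1) * |hermiteTensor β x|
        = ‖x‖ ^ k * (‖x‖ * |hermiteTensor β x|) := by ring
      _ ≤ ‖x‖ ^ k * ((∑ i, |x i|) * |hermiteTensor β x|) := by
          gcongr; exact euclidean_norm_le_sum x
      _ = ∑ i, ‖x‖ ^ k * |x i * hermiteTensor β x| := by
          rw [Finset.sum_mul, Finset.mul_sum]; simp only [abs_mul]
      _ ≤ ∑ i : Fin d, (2 * C * 2 ^ p) * weight β ^ (p + 1) := by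
          refine Finset.sum_le_sum fun i _ => ?_
          refine le_trans ?_ (ladder_bound hC (h x) β i)
          rw [coord_mul_hermiteTensor]
          refine (mul_le_mul_of_nonneg_left (abs_add_le _ _) (by positivity)).trans_eq ?_
          rw [abs_mul, abs_mul]; ring
      _ = _ := by simp; ring

/-- The Schwartz seminorms of `η_β` grow at most polynomially in `β`. -/
theorem pow_norm_mul_iteratedFDeriv_le (d k n : ℕ) : ∃ (C : ℝ) (p : ℕ), 0 ≤ C ∧
    ∀ (x : EuclideanSpace ℝ (Fin d)) (β : Fin d → ℕ+),
      ‖x‖ ^ k * ‖iteratedFDeriv ℝ n (hermiteTensor β) x‖ ≤ C * weight β ^ p := by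
  induction n with
  | zero => simpa using pow_norm_mul_hermiteTensor_le d k
  | succ n ih =>
    obtain ⟨C, p, hC, h⟩ := ih
    set L : Fin d → ℝ →L[ℝ] (EuclideanSpace ℝ (Fin d) →L[ℝ] ℝ) := fun i =>
      ContinuousLinearMap.toSpanSingleton ℝ (EuclideanSpace.proj (𝕜 := ℝ) i) with hL
    refine ⟨(∑ i, ‖L i‖) * (2 * C * 2 ^ p), p + 1, by positivity, fun x β => ?_⟩
    have hp : ∀ i, ‖iteratedFDeriv ℝ n (partialTensor β i) x‖ ≤
        |coeffDown (β i)| *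
            ‖iteratedFDeriv ℝ n (hermiteTensor (Function.update β i (β i - 1))) x‖ +
          |coeffUp (β i)| *
            ‖iteratedFDeriv ℝ n (hermiteTensor (Function.update β i (β i + 1))) x‖ := by
      intro i
      unfold partialTensor
      rw [iteratedFDeriv_add_apply
          (contDiff_smul_hermiteTensor _ _).contDiffAt
          (contDiff_smul_hermiteTensor _ _).contDiffAt,
        iteratedFDeriv_const_smul_apply (contDiff_hermiteTensor _).contDiffAt,
        iteratedFDeriv_const_smul_apply (contDiff_hermiteTensor _).contDiffAt]
      refine (norm_add_le _ _).trans_eq ?_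
      rw [norm_smul, norm_smul, norm_neg, Real.norm_eq_abs, Real.norm_eq_abs]
    rw [← norm_iteratedFDeriv_fderiv, fderiv_hermiteTensor, iteratedFDeriv_sum_apply fun i _ =>
      ((L i).contDiff.comp (contDiff_partialTensor β i)).contDiffAt]
    calc _ ≤ ‖x‖ ^ k * ∑ i, ‖L i‖ * ‖iteratedFDeriv ℝ n (partialTensor β i) x‖ := by
          gcongr
          refine norm_sum_le_of_le _ fun i _ => ?_
          exact (L i).norm_iteratedFDeriv_comp_left
            (contDiff_partialTensor β i (r := n)).contDiffAt le_rfl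
      _ = ∑ i, ‖L i‖ * (‖x‖ ^ k * ‖iteratedFDeriv ℝ n (partialTensor β i) x‖) := by
          rw [Finset.mul_sum]
          exact Finset.sum_congr rfl fun i _ => by ring
      _ ≤ ∑ i, ‖L i‖ * ((2 * C * 2 ^ p) * weight β ^ (p + 1)) := by
          refine Finset.sum_le_sum fun i _ => ?_
          refine mul_le_mul_of_nonneg_left ?_ (norm_nonneg (L i))
          refine le_trans ?_ (ladder_bound hC (h x) β i)
          refine (mul_le_mul_of_nonneg_left (hp i) (by positivity)).trans_eq ?_
          ring
      _ = _ := by rw [← Finset.sum_mul]; ring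

theorem summable_prod_pi {g : ℕ+ → ℝ} (hg : Summable g) (h0 : ∀ n, 0 ≤ g n) (d : ℕ) :
    Summable fun β : Fin d → ℕ+ => ∏ i, g (β i) := by
  induction d with
  | zero => exact Summable.of_finite
  | succ d ih =>
    rw [← (Fin.consEquiv fun _ : Fin (d + 1) => ℕ+).summable_iff]
    have := hg.mul_of_nonneg ih h0 fun β => Finset.prod_nonneg fun i _ => h0 _
    refine this.congr fun β => ?_
    simp [Fin.prod_univ_succ, Fin.consEquiv]

/-- A tempered distribution has Hermite coefficients of at most polynomial growth:
there is a multi-index `θ` with `∑_β T(η_β)² β^{-θ} < ∞`. -/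
theorem tempered_distribution_hermite_coefficients (d : ℕ) (hd : 1 ≤ d)
    (T : SchwartzMap (EuclideanSpace ℝ (Fin d)) ℝ →L[ℝ] ℝ)
    (η : (Fin d → ℕ+) → SchwartzMap (EuclideanSpace ℝ (Fin d)) ℝ)
    (hη : ∀ (β : Fin d → ℕ+) (x : EuclideanSpace ℝ (Fin d)),
      η β x = hermiteTensor β x) :
    ∃ θ : Fin d → ℕ,
      Summable fun β : Fin d → ℕ+ =>
        (T (η β)) ^ 2 * ∏ i, (((β i : ℕ) : ℝ) ^ (θ i))⁻¹ := by
  obtain ⟨s, A, -, hA⟩ := Seminorm.bound_of_continuous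
    (schwartz_withSeminorms ℝ (EuclideanSpace ℝ (Fin d)) ℝ)
    ((normSeminorm ℝ ℝ).comp T.toLinearMap) (continuous_norm.comp T.continuous)
  choose C p hC h using fun kn : ℕ × ℕ => pow_norm_mul_iteratedFDeriv_le d kn.1 kn.2
  -- one constant and one exponent serving all the finitely many seminorms in `s`
  set B : ℝ := ∑ kn ∈ s, C kn with hB
  set q : ℕ := ∑ kn ∈ s, p kn with hq
  have hB0 : 0 ≤ B := Finset.sum_nonneg fun kn _ => hC kn
  have hT : ∀ β, |T (η β)| ≤ A * (B * weight β ^ q) := by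
    intro β
    have hW := one_le_weight β
    have h1 : |T (η β)| ≤
        A * (s.sup (schwartzSeminormFamily ℝ (EuclideanSpace ℝ (Fin d)) ℝ)) (η β) :=
      hA (η β)
    refine h1.trans (mul_le_mul_of_nonneg_left ?_ A.2)
    refine Seminorm.finset_sup_apply_le (by positivity) fun kn hkn => ?_
    refine SchwartzMap.seminorm_le_bound ℝ kn.1 kn.2 (η β) (by positivity) fun x => ?_
    have e : (η β : EuclideanSpace ℝ (Fin d) → ℝ) = hermiteTensor β := funext (hη β)
    rw [e]
    refine (h kn x β).trans ?_
    gcongr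
    · exact Finset.single_le_sum (fun kn _ => hC kn) hkn
    · exact Finset.single_le_sum (fun kn _ => Nat.zero_le (p kn)) hkn
  refine ⟨fun _ => 2 * q + 2, ?_⟩
  have hsum : Summable fun n : ℕ+ => (((n : ℕ) : ℝ) ^ 2)⁻¹ :=
    (Real.summable_nat_pow_inv.2 one_lt_two).comp_injective PNat.coe_injective
  refine Summable.of_nonneg_of_le (fun β => by positivity) (fun β => ?_)
    ((summable_prod_pi hsum (fun n => by positivity) d).mul_left ((A * B) ^ 2))
  have hW := one_le_weight β
  have h2 : (T (η β)) ^ 2 ≤ (A * (B * weight β ^ q)) ^ 2 := by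
    rw [← sq_abs]
    gcongr
    exact hT β
  have e1 : ∀ m : ℕ, ∏ i, (((β i : ℕ) : ℝ) ^ m)⁻¹ = (weight β ^ m)⁻¹ := fun m => by
    rw [Finset.prod_inv_distrib, Finset.prod_pow, weight]
  rw [e1, e1]
  calc _ ≤ (A * (B * weight β ^ q)) ^ 2 * (weight β ^ (2 * q + 2))⁻¹ := by gcongr
    _ = _ := by
      have : weight β ≠ 0 := by positivity
      field_simp
      ring
end

section
/- Let d ≥ 1 and let ψ₀ : ℝ^d → ℂ be a Schwartz function. For t > 0 define ψ(x,t) := (4πit)^{−d/2} ∫_{ℝ^d} e^{i|x−y|²/(4t)} ψ₀(y) dy, where (4πit)^{−d/2} is computed using the principal branch of the complex power. Then ψ is smooth on ℝ^d × (0,∞), solves the free Schrödinger equation i ∂ψ/∂t (x,t) + Δ_x ψ(x,t) = 0 for all x ∈ ℝ^d and t > 0, and ψ(x,t) → ψ₀(x) as t → 0⁺ for every x ∈ ℝ^d. (The d-dimensional Schrödinger kernel K_t propagates the initial data.) -/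
/-!
For `t > 0` the evolution has the Fourier representation
`ψ(x, t) = ∫ exp(2πi⟨x, ξ⟩ - 4π²i t|ξ|²) 𝓕ψ₀(ξ) dξ` (`freeSchrodinger_eq_extension`). It is
obtained from the multiplication formula `∫ 𝓕ψ₀ · g = ∫ ψ₀ · 𝓕g` applied to modulated Gaussians
of parameter `b = ε + 4π²i t`, letting `ε → 0⁺` by dominated convergence; the principal branch is
respected since `π / b` stays off the negative real axis.

The right-hand side makes sense for every real `t` and is the Fourier integral of a measure carried
by the paraboloid `{(ξ, |ξ|²)}` in `ℝ^d × ℝ`, with all moments finite because `𝓕ψ₀` is Schwartz.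
Hence it is smooth jointly in `(x, t)` (`RapidDecay.contDiff_extension`), its derivatives are
computed under the integral sign, and `i∂_t + Δ` has a symbol that vanishes on the paraboloid
(`RapidDecay.schrodinger_extension`). By continuity at `t = 0`, the limit `t → 0⁺` is the Fourier
inversion formula for `ψ₀`.
-/

open scoped BigOperators
open MeasureTheory Complex

/-- The partial derivative of `f : ℝ^d → ℂ` in the `i`-th coordinate direction. -/
noncomputable def pderivC {d : ℕ} (f : EuclideanSpace ℝ (Fin d) → ℂ) (i : Fin d)
    (x : EuclideanSpace ℝ (Fin d)) : ℂ :=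
  fderiv ℝ f x (EuclideanSpace.single i 1)

/-- The Laplacian `Δf = ∑ᵢ ∂²f/∂xᵢ²` of `f : ℝ^d → ℂ`. -/
noncomputable def laplacianC {d : ℕ} (f : EuclideanSpace ℝ (Fin d) → ℂ)
    (x : EuclideanSpace ℝ (Fin d)) : ℂ :=
  ∑ i, pderivC (pderivC f i) i x

/-- The free Schrödinger evolution of initial data `ψ₀`,
`ψ(x,t) = (4πit)^{-d/2} ∫ e^{i|x-y|²/(4t)} ψ₀(y) dy` (principal branch of the
complex power). -/
noncomputable def freeSchrodinger {d : ℕ} (ψ₀ : EuclideanSpace ℝ (Fin d) → ℂ)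
    (x : EuclideanSpace ℝ (Fin d)) (t : ℝ) : ℂ :=
  (4 * (Real.pi : ℂ) * Complex.I * (t : ℂ)) ^ (-(d : ℂ) / 2) *
    ∫ y : EuclideanSpace ℝ (Fin d),
      Complex.exp (Complex.I * ((‖x - y‖ ^ 2 : ℝ) : ℂ) / (4 * (t : ℂ))) * ψ₀ y

open scoped FourierTransform Topology InnerProductSpace
open Filter

/-! ### Superpositions of plane waves over the paraboloid -/

/-- Lebesgue measure on `ℝ^d` lifted to the paraboloid `{(ξ, s) | s = |ξ|²}` in frequency space
`ℝ^d × ℝ`. -/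
noncomputable def paraboloidMeasure (d : ℕ) : Measure (EuclideanSpace ℝ (Fin d) × ℝ) :=
  (volume : Measure (EuclideanSpace ℝ (Fin d))).map (fun ξ => (ξ, ‖ξ‖ ^ 2))

/-- The bilinear form `L((ξ, s), (x, t)) = -⟨ξ, x⟩ + 2π s t`. On the paraboloid,
`exp(-2πi L) = exp(2πi⟨ξ, x⟩ - 4π²i t|ξ|²)` is a plane wave solving the free Schrödinger equation. -/
noncomputable def phaseForm (d : ℕ) : (EuclideanSpace ℝ (Fin d) × ℝ) →L[ℝ]
    (EuclideanSpace ℝ (Fin d) × ℝ) →L[ℝ] ℝ :=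
  -((innerSL ℝ).bilinearComp (ContinuousLinearMap.fst ℝ _ ℝ) (ContinuousLinearMap.fst ℝ _ ℝ)) +
    (2 * Real.pi) • ((ContinuousLinearMap.mul ℝ ℝ).bilinearComp
      (ContinuousLinearMap.snd ℝ _ ℝ) (ContinuousLinearMap.snd ℝ _ ℝ))

lemma phaseForm_apply {d : ℕ} (v w : EuclideanSpace ℝ (Fin d) × ℝ) :
    phaseForm d v w = -⟪v.1, w.1⟫_ℝ + 2 * Real.pi * (v.2 * w.2) := by
  simp [phaseForm]

/-- The superposition `(x, t) ↦ ∫ exp(-2πi L(v, (x, t))) f(v) dμ(v)` of plane waves over the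
paraboloid (the Fourier extension operator), with `L` the `phaseForm`. -/
noncomputable def extension {d : ℕ} (f : EuclideanSpace ℝ (Fin d) × ℝ → ℂ) :
    EuclideanSpace ℝ (Fin d) × ℝ → ℂ :=
  VectorFourier.fourierIntegral Real.fourierChar (paraboloidMeasure d)
    (phaseForm d).toLinearMap₁₂ f

/-- `f` is a.e. strongly measurable and all its absolute moments with respect to the paraboloid
measure are finite. -/
def RapidDecay {d : ℕ} (f : EuclideanSpace ℝ (Fin d) × ℝ → ℂ) : Prop :=
  AEStronglyMeasurable f (paraboloidMeasure d) ∧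
    ∀ n : ℕ, Integrable (fun v => ‖v‖ ^ n * ‖f v‖) (paraboloidMeasure d)

/-- The function `-2πi L(·, w) f`: multiplication by the Fourier symbol of the directional
derivative `∂_w`. -/
noncomputable def symbolMul {d : ℕ} (w : EuclideanSpace ℝ (Fin d) × ℝ)
    (f : EuclideanSpace ℝ (Fin d) × ℝ → ℂ) (v : EuclideanSpace ℝ (Fin d) × ℝ) : ℂ :=
  -(2 * Real.pi * I) * (phaseForm d v w : ℂ) * f v

lemma measurable_paraboloid (d : ℕ) :
    Measurable (fun ξ : EuclideanSpace ℝ (Fin d) => (ξ, ‖ξ‖ ^ 2)) :=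
  Continuous.measurable (by fun_prop)

namespace RapidDecay

variable {d : ℕ} {f : EuclideanSpace ℝ (Fin d) × ℝ → ℂ}

lemma integrable (hf : RapidDecay f) : Integrable f (paraboloidMeasure d) :=
  (hf.2 0).mono hf.1 (Eventually.of_forall fun v => by simp)

lemma symbolMul (hf : RapidDecay f) (w : EuclideanSpace ℝ (Fin d) × ℝ) :
    RapidDecay (symbolMul w f) := by
  have hm : AEStronglyMeasurable (_root_.symbolMul w f) (paraboloidMeasure d) := by
    have hc : Continuous fun v : EuclideanSpace ℝ (Fin d) × ℝ =>
        -(2 * Real.pi * I) * (phaseForm d v w : ℂ) := by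
      fun_prop
    exact hc.aestronglyMeasurable.mul hf.1
  refine ⟨hm, fun n => ?_⟩
  refine ((hf.2 (n + 1)).const_mul (2 * Real.pi * ‖phaseForm d‖ * ‖w‖)).mono
    ((by fun_prop : Continuous fun v : EuclideanSpace ℝ (Fin d) × ℝ =>
      ‖v‖ ^ n).aestronglyMeasurable.mul hm.norm) (Eventually.of_forall fun v => ?_)
  have h := (phaseForm d).le_opNorm₂ v w
  have hpi := Real.pi_pos
  have e : ‖_root_.symbolMul w f v‖ = 2 * Real.pi * ‖phaseForm d v w‖ * ‖f v‖ := by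
    simp [_root_.symbolMul, abs_of_pos hpi]
  rw [Real.norm_of_nonneg (by positivity), Real.norm_of_nonneg (by positivity), e]
  calc ‖v‖ ^ n * (2 * Real.pi * ‖phaseForm d v w‖ * ‖f v‖)
      ≤ ‖v‖ ^ n * (2 * Real.pi * (‖phaseForm d‖ * ‖v‖ * ‖w‖) * ‖f v‖) := by gcongr
    _ = _ := by ring

lemma contDiff_extension (hf : RapidDecay f) : ContDiff ℝ (⊤ : ℕ∞) (extension f) :=
  VectorFourier.contDiff_fourierIntegral (phaseForm d) fun n _ => hf.2 n

/-- Differentiation of a superposition of plane waves in a direction `w` amounts to multiplying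
the amplitude by the symbol of `∂_w`; this is differentiation under the integral sign. -/
lemma fderiv_extension (hf : RapidDecay f) (p w : EuclideanSpace ℝ (Fin d) × ℝ) :
    fderiv ℝ (extension f) p w = extension (_root_.symbolMul w f) p := by
  have h1 : Integrable (fun v => ‖v‖ * ‖f v‖) (paraboloidMeasure d) := by
    simpa using hf.2 1
  have hi : Integrable (VectorFourier.fourierSMulRight (phaseForm d) f) (paraboloidMeasure d) := by
    refine (h1.const_mul (2 * Real.pi * ‖phaseForm d‖)).mono
      hf.1.fourierSMulRight (Eventually.of_forall fun v => ?_)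
    refine (VectorFourier.norm_fourierSMulRight_le (phaseForm d) f v).trans ?_
    rw [Real.norm_of_nonneg (by have := Real.pi_pos; positivity)]
    exact le_of_eq (by ring)
  unfold extension
  rw [VectorFourier.fderiv_fourierIntegral _ hf.integrable h1,
    Real.fourierIntegral_continuousLinearMap_apply' hi]
  congr 1
  ext v
  simp [_root_.symbolMul, mul_assoc]

lemma deriv_extension (hf : RapidDecay f) (x : EuclideanSpace ℝ (Fin d)) (t : ℝ) :
    deriv (fun s => extension f (x, s)) t = extension (_root_.symbolMul (0, 1) f) (x, t) := by
  have hd : HasFDerivAt (extension f) (fderiv ℝ (extension f) (x, t)) (x, t) :=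
    ((hf.contDiff_extension.differentiable (by simp)) _).hasFDerivAt
  have hc : HasDerivAt (fun s : ℝ => (x, s)) ((0 : EuclideanSpace ℝ (Fin d)), (1 : ℝ)) t :=
    (hasDerivAt_const t x).prodMk (hasDerivAt_id t)
  rw [← hf.fderiv_extension]
  exact (hd.comp_hasDerivAt t hc).deriv

lemma pderivC_extension (hf : RapidDecay f) (t : ℝ) (i : Fin d) :
    pderivC (fun y => extension f (y, t)) i =
      fun y => extension (_root_.symbolMul (EuclideanSpace.single i 1, 0) f) (y, t) := by
  ext x
  have hd : HasFDerivAt (extension f) (fderiv ℝ (extension f) (x, t)) (x, t) :=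
    ((hf.contDiff_extension.differentiable (by simp)) _).hasFDerivAt
  have hc : HasFDerivAt (fun y : EuclideanSpace ℝ (Fin d) => (y, t))
      (ContinuousLinearMap.inl ℝ (EuclideanSpace ℝ (Fin d)) ℝ) x :=
    hasFDerivAt_prodMk_left x t
  have := (hd.comp x hc).fderiv
  rw [← hf.fderiv_extension, pderivC]
  exact (DFunLike.congr_fun this (EuclideanSpace.single i 1)).trans rfl

lemma extension_integrand (hf : RapidDecay f) (p : EuclideanSpace ℝ (Fin d) × ℝ) :
    Integrable (fun v => Real.fourierChar (-phaseForm d v p) • f v) (paraboloidMeasure d) :=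
  (VectorFourier.fourierIntegral_convergent_iff Real.continuous_fourierChar
    (by apply (phaseForm d).continuous₂ : Continuous (fun p : (EuclideanSpace ℝ (Fin d) × ℝ) ×
      (EuclideanSpace ℝ (Fin d) × ℝ) ↦ (phaseForm d).toLinearMap₁₂ p.1 p.2)) p).2 hf.integrable

/-- Every rapidly decaying superposition of plane waves over the paraboloid solves the free
Schrödinger equation, since the symbol of `i∂_t + Δ` is `4π²(s - |ξ|²)`, which vanishes there. -/
lemma schrodinger_extension (hf : RapidDecay f) (x : EuclideanSpace ℝ (Fin d)) (t : ℝ) :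
    I * deriv (fun s => extension f (x, s)) t + laplacianC (fun y => extension f (y, t)) x = 0 := by
  simp only [laplacianC, hf.pderivC_extension, (hf.symbolMul _).pderivC_extension,
    hf.deriv_extension]
  simp only [extension, VectorFourier.fourierIntegral,
    ContinuousLinearMap.toLinearMap₁₂_apply_apply_apply]
  rw [← integral_const_mul, ← integral_finsetSum _
      (fun i _ => ((hf.symbolMul _).symbolMul _).extension_integrand _),
    ← integral_add (((hf.symbolMul _).extension_integrand _).const_mul I)
      (integrable_finsetSum _ fun i _ => ((hf.symbolMul _).symbolMul _).extension_integrand _)]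
  apply integral_eq_zero_of_ae
  have hs : ∀ᵐ v ∂paraboloidMeasure d, v.2 = ‖v.1‖ ^ 2 := by
    rw [paraboloidMeasure, ae_map_iff (measurable_paraboloid d).aemeasurable
      (measurableSet_eq_fun (by fun_prop) (by fun_prop))]
    simp
  filter_upwards [hs] with v hv
  simp only [_root_.symbolMul, phaseForm_apply, Circle.smul_def, smul_eq_mul, Pi.zero_apply]
  simp only [EuclideanSpace.inner_single_right, inner_zero_right, hv, EuclideanSpace.norm_sq_eq]
  push_cast
  simp only [Finset.mul_sum, Finset.sum_mul, mul_zero, add_zero, neg_zero, zero_add, mul_one,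
    ← Finset.sum_add_distrib]
  refine Finset.sum_eq_zero fun i _ => ?_
  simp only [Real.norm_eq_abs, sq_abs, one_mul, conj_trivial, ← ofReal_pow]
  push_cast
  ring

end RapidDecay

/-! ### The Fourier representation of the evolution -/

lemma rapidDecay_fst {d : ℕ} (φ : SchwartzMap (EuclideanSpace ℝ (Fin d)) ℂ) :
    RapidDecay (fun v : EuclideanSpace ℝ (Fin d) × ℝ => φ v.1) := by
  have hc : Continuous fun v : EuclideanSpace ℝ (Fin d) × ℝ => φ v.1 :=
    φ.continuous.comp continuous_fst
  refine ⟨hc.aestronglyMeasurable, fun n => ?_⟩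
  have hc' : Continuous fun v : EuclideanSpace ℝ (Fin d) × ℝ => ‖v‖ ^ n * ‖φ v.1‖ := by
    fun_prop
  rw [paraboloidMeasure, integrable_map_measure hc'.aestronglyMeasurable
    (measurable_paraboloid d).aemeasurable]
  refine ((φ.integrable_pow_mul volume n).add (φ.integrable_pow_mul volume (2 * n))).mono
    (hc'.comp (by fun_prop : Continuous fun ξ : EuclideanSpace ℝ (Fin d) =>
      (ξ, ‖ξ‖ ^ 2))).aestronglyMeasurable (Eventually.of_forall fun ξ => ?_)
  simp only [Function.comp_apply, Pi.add_apply]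
  rw [Real.norm_of_nonneg (by positivity), Real.norm_of_nonneg (by positivity), ← add_mul]
  gcongr
  rw [Prod.norm_mk, norm_pow, norm_norm, pow_mul]
  rcases le_total ‖ξ‖ (‖ξ‖ ^ 2) with h | h
  · rw [max_eq_right h]; exact le_add_of_nonneg_left (by positivity)
  · rw [max_eq_left h]; exact le_add_of_nonneg_right (by positivity)

lemma extension_fst {d : ℕ} (φ : SchwartzMap (EuclideanSpace ℝ (Fin d)) ℂ)
    (x : EuclideanSpace ℝ (Fin d)) (t : ℝ) :
    extension (fun v => φ v.1) (x, t) =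
      ∫ ξ, cexp (-(4 * Real.pi ^ 2 * t * I) * ‖ξ‖ ^ 2 + 2 * Real.pi * I * ⟪x, ξ⟫_ℝ) * φ ξ := by
  rw [extension, VectorFourier.fourierIntegral, paraboloidMeasure, integral_map]
  · congr 1
    ext ξ
    simp only [ContinuousLinearMap.toLinearMap₁₂_apply_apply_apply, phaseForm_apply,
      Circle.smul_def, smul_eq_mul, Real.fourierChar_apply, real_inner_comm x ξ]
    congr 2
    push_cast
    ring
  · exact (measurable_paraboloid d).aemeasurable
  · exact ((rapidDecay_fst φ).extension_integrand (x, t)).aestronglyMeasurable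

/-- Regularized propagator formula, for complex Gaussians with `Re b > 0`: the multiplication
formula `∫ 𝓕ψ₀ · g = ∫ ψ₀ · 𝓕g` with `g` a modulated Gaussian. -/
lemma gaussian_identity {d : ℕ} (ψ₀ : SchwartzMap (EuclideanSpace ℝ (Fin d)) ℂ)
    (x : EuclideanSpace ℝ (Fin d)) {b : ℂ} (hb : 0 < b.re) :
    ∫ ξ, cexp (-b * ‖ξ‖ ^ 2 + 2 * Real.pi * I * ⟪x, ξ⟫_ℝ) * (𝓕 ψ₀) ξ =
      (Real.pi / b) ^ ((d : ℂ) / 2) *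
        ∫ y, cexp (-Real.pi ^ 2 * ‖x - y‖ ^ 2 / b) * ψ₀ y := by
  have hg : Integrable (fun ξ : EuclideanSpace ℝ (Fin d) =>
      cexp (-b * ‖ξ‖ ^ 2 + 2 * Real.pi * I * ⟪x, ξ⟫_ℝ)) :=
    GaussianFourier.integrable_cexp_neg_mul_sq_norm_add hb _ _
  have h := VectorFourier.integral_fourierIntegral_smul_eq_flip (μ := volume) (ν := volume)
    (L := innerₗ (EuclideanSpace ℝ (Fin d))) Real.continuous_fourierChar continuous_inner
    ψ₀.integrable hg
  rw [flip_innerₗ] at h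
  calc _ = ∫ ξ, (𝓕 (ψ₀ : EuclideanSpace ℝ (Fin d) → ℂ)) ξ •
        cexp (-b * ‖ξ‖ ^ 2 + 2 * Real.pi * I * ⟪x, ξ⟫_ℝ) := by
        simp only [SchwartzMap.fourier_coe, smul_eq_mul, mul_comm]
    _ = ∫ y, ψ₀ y • (𝓕 (fun ξ : EuclideanSpace ℝ (Fin d) =>
        cexp (-b * ‖ξ‖ ^ 2 + 2 * Real.pi * I * ⟪x, ξ⟫_ℝ))) y := h
    _ = _ := by
        rw [← integral_const_mul]
        congr 1
        ext y
        rw [fourier_gaussian_innerProductSpace' hb, finrank_euclideanSpace_fin, smul_eq_mul]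
        ring

/-- The convolution with the Schrödinger kernel equals the Fourier-side solution formula
`∫ exp(2πi⟨x, ξ⟩ - 4π²i t|ξ|²) 𝓕ψ₀(ξ) dξ`, the limit of `gaussian_identity` as
`b = ε + 4π²i t` with `ε → 0⁺`. -/
lemma freeSchrodinger_eq_extension {d : ℕ} (ψ₀ : SchwartzMap (EuclideanSpace ℝ (Fin d)) ℂ)
    (x : EuclideanSpace ℝ (Fin d)) {t : ℝ} (ht : 0 < t) :
    freeSchrodinger (fun y => ψ₀ y) x t = extension (fun v => (𝓕 ψ₀) v.1) (x, t) := by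
  have hpi := Real.pi_pos
  have hpc : (Real.pi : ℂ) ≠ 0 := by exact_mod_cast hpi.ne'
  have htc : (t : ℂ) ≠ 0 := by exact_mod_cast ht.ne'
  set b : ℝ → ℂ := fun ε => ε + 4 * Real.pi ^ 2 * t * I with hbdef
  have hb0 : b 0 = 4 * Real.pi ^ 2 * t * I := by simp [hbdef]
  have hb0' : b 0 ≠ 0 := by rw [hb0]; simp [hpc, htc]
  have hre : ∀ ε, (b ε).re = ε := fun ε => by
    simp [hbdef, ← ofReal_pow]
  have hbt : Tendsto b (𝓝[>] 0) (𝓝 (b 0)) :=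
    ((by fun_prop : Continuous b).tendsto 0).mono_left nhdsWithin_le_nhds
  -- Both Gaussian factors have modulus at most `1` because `Re b` and `Re b⁻¹` are nonnegative,
  -- so `|𝓕ψ₀|` and `|ψ₀|` dominate the two integrands.
  have hL : Tendsto (fun ε => ∫ ξ, cexp (-b ε * ‖ξ‖ ^ 2 + 2 * Real.pi * I * ⟪x, ξ⟫_ℝ) * (𝓕 ψ₀) ξ)
      (𝓝[>] 0)
      (𝓝 (∫ ξ, cexp (-b 0 * ‖ξ‖ ^ 2 + 2 * Real.pi * I * ⟪x, ξ⟫_ℝ) * (𝓕 ψ₀) ξ)) := by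
    refine tendsto_integral_filter_of_dominated_convergence (fun ξ => ‖(𝓕 ψ₀) ξ‖)
      (Eventually.of_forall fun ε => Continuous.aestronglyMeasurable ?_) ?_
      (𝓕 ψ₀).integrable.norm (Eventually.of_forall fun ξ => ?_)
    · have := (𝓕 ψ₀).continuous
      fun_prop
    · filter_upwards [self_mem_nhdsWithin] with ε hε
      refine Eventually.of_forall fun ξ => ?_
      rw [norm_mul]
      refine mul_le_of_le_one_left (norm_nonneg _) ?_
      rw [Complex.norm_exp, Real.exp_le_one_iff]
      have hε' : 0 < ε := hε
      have : (-b ε * ‖ξ‖ ^ 2 + 2 * Real.pi * I * ⟪x, ξ⟫_ℝ).re = -ε * ‖ξ‖ ^ 2 := by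
        simp [← ofReal_pow, hre]
      rw [this]
      nlinarith [sq_nonneg ‖ξ‖]
    · exact ((((hbt.neg).mul_const _).add_const _).cexp).mul_const _
  have hR : Tendsto (fun ε => ∫ y, cexp (-Real.pi ^ 2 * ‖x - y‖ ^ 2 / b ε) * ψ₀ y) (𝓝[>] 0)
      (𝓝 (∫ y, cexp (-Real.pi ^ 2 * ‖x - y‖ ^ 2 / b 0) * ψ₀ y)) := by
    refine tendsto_integral_filter_of_dominated_convergence (fun y => ‖ψ₀ y‖)
      (Eventually.of_forall fun ε => Continuous.aestronglyMeasurable ?_) ?_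
      ψ₀.integrable.norm (Eventually.of_forall fun y => ?_)
    · have := ψ₀.continuous
      fun_prop
    · filter_upwards [self_mem_nhdsWithin] with ε hε
      refine Eventually.of_forall fun y => ?_
      rw [norm_mul]
      refine mul_le_of_le_one_left (norm_nonneg _) ?_
      rw [Complex.norm_exp, Real.exp_le_one_iff]
      have hε' : 0 < ε := hε
      have : (-Real.pi ^ 2 * ‖x - y‖ ^ 2 / b ε : ℂ).re =
          -(Real.pi ^ 2 * ‖x - y‖ ^ 2 * (ε / normSq (b ε))) := by
        have : (-Real.pi ^ 2 * ‖x - y‖ ^ 2 / b ε : ℂ) =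
            ((-(Real.pi ^ 2 * ‖x - y‖ ^ 2) : ℝ) : ℂ) * (b ε)⁻¹ := by
          push_cast; ring
        rw [this, re_ofReal_mul, inv_re, hre]; ring
      rw [this, Left.neg_nonpos_iff]
      have := normSq_nonneg (b ε)
      positivity
    · exact ((tendsto_const_nhds.div hbt hb0').cexp).mul_const _
  have hslit : (Real.pi / b 0 : ℂ) = (4 * Real.pi * I * t)⁻¹ := by
    rw [hb0]; field_simp
  have him : (4 * Real.pi * I * t : ℂ) = ((4 * Real.pi * t : ℝ) : ℂ) * I := by push_cast; ring
  have harg : (4 * Real.pi * I * t : ℂ).arg ≠ Real.pi := by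
    rw [him, arg_real_mul _ (by positivity), arg_I]
    linarith
  -- `π / b 0` lies on the negative imaginary axis, away from the branch cut of the power.
  have hC : Tendsto (fun ε => (Real.pi / b ε : ℂ) ^ ((d : ℂ) / 2)) (𝓝[>] 0)
      (𝓝 ((Real.pi / b 0 : ℂ) ^ ((d : ℂ) / 2))) := by
    refine (tendsto_const_nhds.div hbt hb0').cpow tendsto_const_nhds ?_
    rw [hslit, him]
    refine Or.inr ?_
    rw [inv_im]
    simp [hpi.ne', ht.ne']
  have key := tendsto_nhds_unique (hL.congr' (by
    filter_upwards [self_mem_nhdsWithin] with ε hε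
    exact gaussian_identity ψ₀ x ((hre ε).symm ▸ hε))) (hC.mul hR)
  rw [extension_fst, freeSchrodinger, ← hb0, key, hslit, inv_cpow _ _ harg, neg_div, cpow_neg]
  congr 2
  ext y
  congr 2
  rw [hb0]
  push_cast
  field_simp
  simp

/-- The Schrödinger kernel propagates Schwartz initial data: the resulting wave
function is smooth for `t > 0`, solves the free Schrödinger equation, and
attains the initial data as `t → 0⁺`. -/
theorem schrodinger_kernel_propagates (d : ℕ) (hd : 1 ≤ d)
    (ψ₀ : SchwartzMap (EuclideanSpace ℝ (Fin d)) ℂ)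
    (ψ : EuclideanSpace ℝ (Fin d) → ℝ → ℂ)
    (hψ : ∀ x t, ψ x t = freeSchrodinger (fun y => ψ₀ y) x t) :
    ContDiffOn ℝ (⊤ : ℕ∞) (fun p : EuclideanSpace ℝ (Fin d) × ℝ => ψ p.1 p.2)
        (Set.univ ×ˢ Set.Ioi (0 : ℝ)) ∧
      (∀ (x : EuclideanSpace ℝ (Fin d)) (t : ℝ), 0 < t →
        Complex.I * deriv (fun s => ψ x s) t + laplacianC (fun y => ψ y t) x = 0) ∧
      ∀ x : EuclideanSpace ℝ (Fin d),
        Filter.Tendsto (fun t => ψ x t) (nhdsWithin 0 (Set.Ioi 0)) (nhds (ψ₀ x)) := by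
  have hdec := rapidDecay_fst (𝓕 ψ₀)
  have hrep : ∀ x t, 0 < t → ψ x t = extension (fun v => (𝓕 ψ₀) v.1) (x, t) :=
    fun x t ht => (hψ x t).trans (freeSchrodinger_eq_extension ψ₀ x ht)
  refine ⟨?_, ?_, ?_⟩
  · exact hdec.contDiff_extension.contDiffOn.congr fun p hp => hrep p.1 p.2 hp.2
  · intro x t ht
    have h1 : (fun s => ψ x s) =ᶠ[𝓝 t] fun s => extension (fun v => (𝓕 ψ₀) v.1) (x, s) := by
      filter_upwards [lt_mem_nhds ht] with s hs using hrep x s hs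
    have h2 : (fun y => ψ y t) = fun y => extension (fun v => (𝓕 ψ₀) v.1) (y, t) :=
      funext fun y => hrep y t ht
    rw [h1.deriv_eq, h2]
    exact hdec.schrodinger_extension x t
  · intro x
    -- At `t = 0` the solution formula is the Fourier inversion integral.
    have h0 : extension (fun v => (𝓕 ψ₀) v.1) (x, 0) = ψ₀ x := by
      have hinv : 𝓕⁻ (𝓕 (ψ₀ : EuclideanSpace ℝ (Fin d) → ℂ)) x = ψ₀ x :=
        ψ₀.integrable.fourierInv_fourier_eq (𝓕 ψ₀).integrable ψ₀.continuous.continuousAt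
      rw [extension_fst, ← hinv, Real.fourierInv_eq']
      congr 1
      ext ξ
      rw [SchwartzMap.fourier_coe, smul_eq_mul, real_inner_comm]
      congr 2
      push_cast
      ring
    rw [← h0]
    have hc : Continuous fun t : ℝ => extension (fun v => (𝓕 ψ₀) v.1) (x, t) :=
      hdec.contDiff_extension.continuous.comp (by fun_prop)
    refine ((hc.tendsto 0).mono_left nhdsWithin_le_nhds).congr' ?_
    filter_upwards [self_mem_nhdsWithin] with t ht using (hrep x t ht).symm
end
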